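/- Under the two-regime setup with C = |μ_a − μ_b| > 0, if for each n the integer k̂_n ∈ {1,…,n} is a maximizer of k ↦ D_n(k) over {1,…,n}, then k̂_n/n → λ as n → ∞. -/

import Mathlib

open Filter

/-!
The normalised CUSUM profile `D_n(k)/n` is uniformly close to the tent function, whose unique
maximum is at `λ`, so any maximiser is close to `λ n`.

Uniformity is the content of `cesaro_uniform`: convergence of Cesàro means gives
`|∑_{t ≤ k} a_t - k μ| ≤ ε n` for all `k ≤ n` simultaneously, once `n` is large. Together with
`sum_two_regime`, which splits the partial sums at the change point `K = ⌊nλ⌋`, this yields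
`cusum_approx`: the signed CUSUM statistic differs by at most `6 ε n` from
`(μ_a - μ_b) k (n - K) / n` for `k ≤ K`, and from `(μ_a - μ_b) K (n - k) / n` for `k ≥ K`.
Comparing `D_n(K) ≤ D_n(k̂_n)` through these formulas bounds `|k̂_n - K|` by a multiple of `ε n`,
and `|K - λ n| ≤ 1`.
-/

lemma cesaro_uniform (a : ℕ → ℝ) (μ : ℝ)
    (h : Tendsto (fun m : ℕ => (1 / (m : ℝ)) * ∑ t ∈ Finset.Icc 1 m, a t) atTop (nhds μ))
    (ε : ℝ) (hε : 0 < ε) :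
    ∀ᶠ n : ℕ in atTop, ∀ k ≤ n, |(∑ t ∈ Finset.Icc 1 k, a t) - k * μ| ≤ ε * n := by
  obtain ⟨N, hN⟩ := Metric.tendsto_atTop.1 h ε hε
  -- `B` dominates the finitely many errors at `k < N`.
  set B : ℝ := ∑ k ∈ Finset.range N, |(∑ t ∈ Finset.Icc 1 k, a t) - k * μ| with hB
  filter_upwards [(tendsto_natCast_atTop_atTop (R := ℝ)).eventually_ge_atTop (B / ε)]
    with n hn k hk
  rw [div_le_iff₀ hε] at hn
  rcases lt_or_ge k N with hkN | hkN
  · have : |(∑ t ∈ Finset.Icc 1 k, a t) - k * μ| ≤ B :=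
      Finset.single_le_sum (f := fun k : ℕ => |(∑ t ∈ Finset.Icc 1 k, a t) - k * μ|)
        (fun _ _ => abs_nonneg _) (Finset.mem_range.2 hkN)
    linarith
  · have hknR : (k : ℝ) ≤ n := by exact_mod_cast hk
    rcases Nat.eq_zero_or_pos k with rfl | hk0
    · simp; positivity
    have hkR : (0 : ℝ) < k := by exact_mod_cast hk0
    have h1 := (hN k hkN).le
    rw [Real.dist_eq] at h1
    have h2 : (∑ t ∈ Finset.Icc 1 k, a t) - k * μ
        = k * ((1 / (k : ℝ)) * (∑ t ∈ Finset.Icc 1 k, a t) - μ) := by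
      field_simp
    rw [h2, abs_mul, abs_of_pos hkR]
    nlinarith

lemma sum_two_regime (a b : ℕ → ℝ) (K k : ℕ) :
    ∑ t ∈ Finset.Icc 1 k, (if t ≤ K then a t else b t) =
      if k ≤ K then ∑ t ∈ Finset.Icc 1 k, a t
      else (∑ t ∈ Finset.Icc 1 K, a t) + (∑ t ∈ Finset.Icc 1 k, b t)
        - ∑ t ∈ Finset.Icc 1 K, b t := by
  induction k with
  | zero => simp
  | succ k ih =>
    rw [Finset.sum_Icc_succ_top (by omega), ih]
    rcases lt_trichotomy k K with h | h | h
    · rw [if_pos h.le, if_pos (by omega), if_pos (by omega), Finset.sum_Icc_succ_top (by omega)]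
    · subst h
      rw [if_pos le_rfl, if_neg (by omega), if_neg (by omega),
        Finset.sum_Icc_succ_top (by omega)]
      ring
    · rw [if_neg (by omega), if_neg (by omega), if_neg (by omega),
        Finset.sum_Icc_succ_top (by omega)]
      ring

/-- Approximation of the signed CUSUM statistic by the discrete tent with apex at `K`, given
uniform control of the partial sums of both regimes. -/
lemma cusum_approx (a b : ℕ → ℝ) (μa μb e : ℝ) (n K : ℕ) (hn : 0 < n) (hK : K ≤ n)
    (hA : ∀ k ≤ n, |(∑ t ∈ Finset.Icc 1 k, a t) - k * μa| ≤ e)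
    (hB : ∀ k ≤ n, |(∑ t ∈ Finset.Icc 1 k, b t) - k * μb| ≤ e) (k : ℕ) (hk : k ≤ n) :
    |((∑ t ∈ Finset.Icc 1 k, (if t ≤ K then a t else b t))
        - (k : ℝ) / n * ∑ t ∈ Finset.Icc 1 n, (if t ≤ K then a t else b t))
      - (μa - μb) * (if k ≤ K then (k : ℝ) * (n - K) / n else (K : ℝ) * (n - k) / n)|
      ≤ 6 * e := by
  have hnR : (0 : ℝ) < n := by exact_mod_cast hn
  have he : 0 ≤ e := (abs_nonneg _).trans (hA 0 (Nat.zero_le _))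
  have key : ∀ j ≤ n, |(∑ t ∈ Finset.Icc 1 j, (if t ≤ K then a t else b t))
      - (if j ≤ K then (j : ℝ) * μa else K * μa + (j - K) * μb)| ≤ 3 * e := by
    intro j hj
    have h1 := abs_le.1 (hA j hj)
    have h2 := abs_le.1 (hA K hK)
    have h3 := abs_le.1 (hB K hK)
    have h4 := abs_le.1 (hB j hj)
    rw [sum_two_regime]
    split_ifs <;> rw [abs_le] <;> constructor <;> linarith
  have h1 := key k hk
  have h2 := key n le_rfl
  have hn' : (if n ≤ K then (n : ℝ) * μa else K * μa + (n - K) * μb)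
      = K * μa + (n - K) * μb := by
    split_ifs with h
    · have : n = K := le_antisymm h hK
      subst this
      ring
    · rfl
  rw [hn'] at h2
  generalize (∑ t ∈ Finset.Icc 1 k, (if t ≤ K then a t else b t)) = S at *
  generalize (∑ t ∈ Finset.Icc 1 n, (if t ≤ K then a t else b t)) = R at *
  have hr0 : 0 ≤ (k : ℝ) / n := by positivity
  have hr1 : (k : ℝ) / n ≤ 1 := by
    rw [div_le_one hnR]
    exact_mod_cast hk
  have h3 : |(k : ℝ) / n * (R - (K * μa + (n - K) * μb))| ≤ 3 * e := by
    rw [abs_mul, abs_of_nonneg hr0]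
    nlinarith [abs_nonneg (R - (K * μa + (n - K) * μb))]
  have h4 : (S - (k : ℝ) / n * R)
      - (μa - μb) * (if k ≤ K then (k : ℝ) * (n - K) / n else (K : ℝ) * (n - k) / n)
      = (S - (if k ≤ K then (k : ℝ) * μa else K * μa + (k - K) * μb))
        - (k : ℝ) / n * (R - (K * μa + (n - K) * μb)) := by
    split_ifs <;> field_simp <;> ring
  rw [h4]
  exact (abs_sub _ _).trans (by linarith)

/-- Two-regime setup: observations follow `(a_t)` up to the change point `k*_n = ⌊nλ⌋`
and `(b_t)` afterwards, with both sequences `[0,M]`-valued and having Cesàro means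
converging to `μ_a` and `μ_b` respectively, and `C = |μ_a − μ_b| > 0`. If for each `n`
the integer `k̂_n ∈ {1,…,n}` maximizes `k ↦ D_n(k)` over `{1,…,n}`, then
`k̂_n / n → λ` as `n → ∞`. -/
theorem cusum_argmax_ratio_tendsto_changepoint
    (lam M : ℝ) (hlam : lam ∈ Set.Ioo (0 : ℝ) 1) (hM : 0 < M)
    (a b : ℕ → ℝ) (μa μb : ℝ)
    (ha : ∀ t : ℕ, a t ∈ Set.Icc 0 M) (hb : ∀ t : ℕ, b t ∈ Set.Icc 0 M)
    (hma : Tendsto (fun m : ℕ => (1 / (m : ℝ)) * ∑ t ∈ Finset.Icc 1 m, a t)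
      atTop (nhds μa))
    (hmb : Tendsto (fun m : ℕ => (1 / (m : ℝ)) * ∑ t ∈ Finset.Icc 1 m, b t)
      atTop (nhds μb))
    (x : ℕ → ℕ → ℝ)
    (hx : ∀ n t : ℕ, x n t = if t ≤ ⌊(n : ℝ) * lam⌋₊ then a t else b t)
    (D : ℕ → ℕ → ℝ)
    (hD : ∀ n k : ℕ, D n k =
      |(∑ t ∈ Finset.Icc 1 k, x n t) - (k : ℝ) / (n : ℝ) * ∑ t ∈ Finset.Icc 1 n, x n t|)
    (hCpos : 0 < |μa - μb|)
    (khat : ℕ → ℕ)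
    (hkhat : ∀ n : ℕ, 1 ≤ n → khat n ∈ Finset.Icc 1 n ∧
      ∀ k ∈ Finset.Icc 1 n, D n k ≤ D n (khat n)) :
    Tendsto (fun n : ℕ => (khat n : ℝ) / (n : ℝ)) atTop (nhds lam) := by
  obtain ⟨hl0, hl1⟩ := hlam
  set C := |μa - μb| with hC
  rw [Metric.tendsto_atTop']
  intro δ hδ
  -- Chosen so that the errors `12 ε / (C (1 - λ))` and `24 ε / (C λ)` are both below `δ / 2`.
  set ε : ℝ := C * δ * lam * (1 - lam) / 48 with hε
  have h1l : 0 < 1 - lam := by linarith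
  have hεpos : 0 < ε := by positivity
  have hlarge := (tendsto_natCast_atTop_atTop (R := ℝ)).eventually_gt_atTop (2 / lam + 2 / δ)
  have hev : ∀ᶠ n : ℕ in atTop, dist ((khat n : ℝ) / n) lam < δ := by
    filter_upwards [cesaro_uniform a μa hma ε hεpos, cesaro_uniform b μb hmb ε hεpos, hlarge]
      with n hA hB hn
    have p1 : 0 < 2 / lam := by positivity
    have p2 : 0 < 2 / δ := by positivity
    have hnR : (0 : ℝ) < n := by linarith
    have hn0 : 0 < n := by exact_mod_cast hnR
    have hnl : 2 < n * lam := (div_lt_iff₀ hl0).1 (by linarith)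
    have hnd : 2 < n * δ := (div_lt_iff₀ hδ).1 (by linarith)
    have happ := cusum_approx a b μa μb (ε * n) n ⌊(n : ℝ) * lam⌋₊ hn0
    obtain ⟨hkm, hmax⟩ := hkhat n hn0
    have hKle : (⌊(n : ℝ) * lam⌋₊ : ℝ) ≤ n * lam := Nat.floor_le (by positivity)
    have hKlt : (n : ℝ) * lam < ⌊(n : ℝ) * lam⌋₊ + 1 := Nat.lt_floor_add_one _
    simp only [hD, hx] at hmax
    generalize ⌊(n : ℝ) * lam⌋₊ = K at *
    generalize khat n = k at *
    rw [Finset.mem_Icc] at hkm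
    have hKn : K ≤ n := by
      have : (K : ℝ) ≤ n := by nlinarith
      exact_mod_cast this
    have hK1 : 1 ≤ K := by
      have : (1 : ℝ) ≤ K := by linarith
      exact_mod_cast this
    have hcmp := hmax K (Finset.mem_Icc.2 ⟨hK1, hKn⟩)
    have e1 := happ hKn hA hB K hKn
    have e2 := happ hKn hA hB k hkm.2
    rw [if_pos le_rfl] at e1
    have e1' := (abs_sub_abs_le_abs_sub _ _).trans ((abs_sub_comm _ _).trans_le e1)
    have e2' := (abs_sub_abs_le_abs_sub _ _).trans e2
    have hKnR : (K : ℝ) ≤ n := by exact_mod_cast hKn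
    have hknR : (k : ℝ) ≤ n := by exact_mod_cast hkm.2
    rw [abs_mul, ← hC, abs_of_nonneg (by
      have : (0 : ℝ) ≤ n - K := by linarith
      positivity)] at e1'
    have hgap : |(k : ℝ) - K| < n * δ / 2 := by
      by_cases hkK : k ≤ K
      · rw [if_pos hkK, abs_mul, ← hC, abs_of_nonneg (a := (k : ℝ) * (n - K) / n) (by
          have : (0 : ℝ) ≤ n - K := by linarith
          positivity)] at e2'
        have hkKR : (k : ℝ) ≤ K := by exact_mod_cast hkK
        have f1 : C * ((K - k) * (n - K) / n) ≤ 12 * (ε * n) := by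
          have : C * (((K : ℝ) - k) * (n - K) / n)
            = C * (K * (n - K) / n) - C * (k * (n - K) / n) := by ring
          linarith
        have f2 : ((K : ℝ) - k) * (1 - lam) ≤ (K - k) * (n - K) / n := by
          rw [le_div_iff₀ hnR, mul_assoc]
          exact mul_le_mul_of_nonneg_left (by linarith) (by linarith)
        have f3 : C * (1 - lam) * ((K : ℝ) - k) ≤ C * (1 - lam) * (n * δ * lam / 4) := by
          have := mul_le_mul_of_nonneg_left f2 hCpos.le
          rw [hε] at f1
          linarith
        have f4 := le_of_mul_le_mul_left f3 (by positivity)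
        rw [abs_of_nonpos (by linarith)]
        nlinarith [mul_pos hnR hδ]
      · rw [if_neg hkK, abs_mul, ← hC, abs_of_nonneg (a := (K : ℝ) * (n - k) / n) (by
          have : (0 : ℝ) ≤ n - k := by linarith
          positivity)] at e2'
        have hkKR : (K : ℝ) ≤ k := by exact_mod_cast (not_le.1 hkK).le
        have f1 : C * (K * (k - K) / n) ≤ 12 * (ε * n) := by
          have : C * ((K : ℝ) * (k - K) / n)
            = C * (K * (n - K) / n) - C * (K * (n - k) / n) := by ring
          linarith
        have f2 : (lam / 2) * ((k : ℝ) - K) ≤ K * (k - K) / n := by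
          rw [le_div_iff₀ hnR, mul_right_comm]
          exact mul_le_mul_of_nonneg_right (by linarith) (by linarith)
        have f3 : C * lam * ((k : ℝ) - K) ≤ C * lam * (n * δ * (1 - lam) / 2) := by
          have := mul_le_mul_of_nonneg_left f2 hCpos.le
          rw [hε] at f1
          linarith
        have f4 := le_of_mul_le_mul_left f3 (by positivity)
        rw [abs_of_nonneg (by linarith)]
        nlinarith [mul_pos (mul_pos hnR hδ) hl0]
    rw [Real.dist_eq, show (k : ℝ) / n - lam = (k - n * lam) / n by field_simp, abs_div,
      abs_of_pos hnR, div_lt_iff₀ hnR, abs_lt]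
    have := abs_lt.1 hgap
    constructor <;> linarith
  obtain ⟨N, hN⟩ := eventually_atTop.1 hev
  exact ⟨N, fun n hn => hN n hn.le⟩
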